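/- For every three-element subset {m} ⊆ {1,…,5} and every syndrome value ε ∈ (ℤ/2ℤ)⁴ for which some Pauli word supported in {m} has syndrome ε, there exists a Pauli word g supported in {m} with ε(g) = ε such that c·φ₅(ε)·g ∉ S₅ for every c ∈ {1, −1, i, −i}. (This is the statement f_{S₅}(3) = 0: no error on more than two qubits is ever corrected by the five-qubit code.) -/

import Mathlib

/-!
Every three-element set `m` of qubits supports two anticommuting logical operators `L₁`, `L₂` of
the five-qubit code, that is, Pauli words commuting with all four generators (`exists_logical_pair`).
Up to cyclic rotation there are only two sets `m` to consider, so such words are exhibited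
explicitly.

Everything in the stabilizer commutes with `L₂`. Let `P` be a word supported in `m` with syndrome
`e`. If `φ₅(e) P` does not commute with `L₂`, then it does not lie in the stabilizer, whatever
its phase. If it does commute with `L₂`, then `φ₅(e) P L₁` does not, since `L₁` and `L₂` anticommute; up to a
phase `P L₁` is a Pauli word, supported in `m` and with the same syndrome as `P`.
The only property of `φ₅` that this uses is that its values are invertible.
-/

open Matrix Kronecker
open scoped Classical

noncomputable section

/-- The four single-qubit Pauli matrices `I, X, Y, Z` (indexed `0,1,2,3`). -/
def PauliMat : Fin 4 → Matrix (Fin 2) (Fin 2) ℂ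
  | 0 => 1
  | 1 => !![0, 1; 1, 0]
  | 2 => !![0, -Complex.I; Complex.I, 0]
  | 3 => !![1, 0; 0, -1]

/-- The allowed phases `{1, -1, i, -i}`. -/
def PauliPhase : Set ℂ := {1, -1, Complex.I, -Complex.I}

/-- The `n`-fold Kronecker product `P₁ ⊗ ⋯ ⊗ Pₙ` of single-qubit Pauli matrices
(qubit 1 leftmost). -/
def pauliWord : (n : ℕ) → (Fin n → Fin 4) → Matrix (Fin (2 ^ n)) (Fin (2 ^ n)) ℂ
  | 0, _ => 1
  | n + 1, P =>
      Matrix.reindex (finProdFinEquiv.trans (finCongr (by ring)))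
        (finProdFinEquiv.trans (finCongr (by ring)))
        (Matrix.kroneckerMap (· * ·) (PauliMat (P 0)) (pauliWord n (fun j => P j.succ)))

/-- The `n`-qubit Pauli group `Gⁿ`, as a set of `2ⁿ × 2ⁿ` complex matrices. -/
def PauliGroup (n : ℕ) : Set (Matrix (Fin (2 ^ n)) (Fin (2 ^ n)) ℂ) :=
  {A | ∃ c ∈ PauliPhase, ∃ P : Fin n → Fin 4, A = c • pauliWord n P}

/-- The syndrome of `g` with respect to generators `gs`: the `i`-th component is `0`
if `g` commutes with `gs i` and `1` otherwise (for Pauli elements, "otherwise" means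
anticommutes). -/
def syndrome {n r : ℕ} (gs : Fin r → Matrix (Fin (2 ^ n)) (Fin (2 ^ n)) ℂ)
    (g : Matrix (Fin (2 ^ n)) (Fin (2 ^ n)) ℂ) : Fin r → ZMod 2 :=
  fun i => if g * gs i = gs i * g then 0 else 1


/-- The four generators of the five-qubit code stabilizer:
g₁ = XZZXI, g₂ = IXZZX, g₃ = XIXZZ, g₄ = ZXIXZ. -/
def fiveGens : Fin 4 → Matrix (Fin (2 ^ 5)) (Fin (2 ^ 5)) ℂ :=
  ![pauliWord 5 ![1, 3, 3, 1, 0], pauliWord 5 ![0, 1, 3, 3, 1],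
    pauliWord 5 ![1, 0, 1, 3, 3], pauliWord 5 ![3, 1, 0, 1, 3]]

/-- The letters (as elements of Fin 4: 0 = I, 1 = X, 2 = Y, 3 = Z) of the Pauli word
assigned by the error-correcting function of the five-qubit code to a syndrome. -/
def phi5Word (e : Fin 4 → ZMod 2) : Fin 5 → Fin 4 :=
  if e = ![0, 0, 0, 0] then ![0, 0, 0, 0, 0]
  else if e = ![0, 0, 0, 1] then ![1, 0, 0, 0, 0]
  else if e = ![0, 0, 1, 0] then ![0, 0, 3, 0, 0]
  else if e = ![0, 0, 1, 1] then ![0, 0, 0, 0, 1]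
  else if e = ![0, 1, 0, 0] then ![0, 0, 0, 0, 3]
  else if e = ![0, 1, 0, 1] then ![0, 3, 0, 0, 0]
  else if e = ![0, 1, 1, 0] then ![0, 0, 0, 1, 0]
  else if e = ![0, 1, 1, 1] then ![0, 0, 0, 0, 2]
  else if e = ![1, 0, 0, 0] then ![0, 1, 0, 0, 0]
  else if e = ![1, 0, 0, 1] then ![0, 0, 0, 3, 0]
  else if e = ![1, 0, 1, 0] then ![3, 0, 0, 0, 0]
  else if e = ![1, 0, 1, 1] then ![2, 0, 0, 0, 0]
  else if e = ![1, 1, 0, 0] then ![0, 0, 1, 0, 0]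
  else if e = ![1, 1, 0, 1] then ![0, 2, 0, 0, 0]
  else if e = ![1, 1, 1, 0] then ![0, 0, 2, 0, 0]
  else ![0, 0, 0, 2, 0]

/-- The error-correcting function of the five-qubit code. -/
def phi5 (e : Fin 4 → ZMod 2) : Matrix (Fin (2 ^ 5)) (Fin (2 ^ 5)) ℂ :=
  pauliWord 5 (phi5Word e)

/-- The sign `s` with `PauliMat a * PauliMat b = s • (PauliMat b * PauliMat a)`. -/
def letterSign (a b : Fin 4) : ℤ := if a = 0 ∨ b = 0 ∨ a = b then 1 else -1

/-- In the numbering `I, X, Y, Z = 0, 1, 2, 3`, multiplication of Pauli matrices up to phase is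
bitwise exclusive or. -/
lemma pauliMat_mul (a b : Fin 4) :
    ∃ c : ℂ, c ≠ 0 ∧ PauliMat a * PauliMat b = c • PauliMat (a ^^^ b) := by
  -- Each of the sixteen products has phase `1`, `i` or `-i`.
  fin_cases a <;> fin_cases b <;>
  first
  | (refine ⟨1, one_ne_zero, ?_⟩
     ext i j
     fin_cases i <;> fin_cases j <;> simp [PauliMat, Matrix.mul_apply]
     done)
  | (refine ⟨Complex.I, Complex.I_ne_zero, ?_⟩
     ext i j
     fin_cases i <;> fin_cases j <;> simp [PauliMat, Matrix.mul_apply]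
     done)
  | (refine ⟨-Complex.I, neg_ne_zero.2 Complex.I_ne_zero, ?_⟩
     ext i j
     fin_cases i <;> fin_cases j <;> simp [PauliMat, Matrix.mul_apply])

lemma pauliMat_mul_comm (a b : Fin 4) :
    PauliMat a * PauliMat b = letterSign a b • (PauliMat b * PauliMat a) := by
  fin_cases a <;> fin_cases b <;> ext i j <;> fin_cases i <;> fin_cases j <;>
    simp [PauliMat, Matrix.mul_apply, letterSign]

lemma pauliMat_sq (a : Fin 4) : PauliMat a * PauliMat a = 1 := by
  fin_cases a <;> ext i j <;> fin_cases i <;> fin_cases j <;>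
    simp [PauliMat, Matrix.mul_apply]

lemma pauliWord_succ_mul {n : ℕ} (P Q : Fin (n + 1) → Fin 4) :
    pauliWord (n + 1) P * pauliWord (n + 1) Q =
      Matrix.reindex (finProdFinEquiv.trans (finCongr (by ring)))
        (finProdFinEquiv.trans (finCongr (by ring)))
        (Matrix.kroneckerMap (· * ·) (PauliMat (P 0) * PauliMat (Q 0))
          (pauliWord n (fun j => P j.succ) * pauliWord n (fun j => Q j.succ))) := by
  simp only [pauliWord, Matrix.reindex_apply, Matrix.submatrix_mul_equiv]
  congr 1
  exact (Matrix.mul_kronecker_mul _ _ _ _).symm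

lemma pauliWord_mul : ∀ {n : ℕ} (P Q : Fin n → Fin 4),
    ∃ c : ℂ, c ≠ 0 ∧ pauliWord n P * pauliWord n Q = c • pauliWord n (fun i => P i ^^^ Q i)
  | 0, _, _ => ⟨1, one_ne_zero, by simp [pauliWord]⟩
  | n + 1, P, Q => by
      obtain ⟨c, hc, h⟩ := pauliMat_mul (P 0) (Q 0)
      obtain ⟨d, hd, h'⟩ := pauliWord_mul (fun j => P j.succ) (fun j => Q j.succ)
      refine ⟨c * d, mul_ne_zero hc hd, ?_⟩
      rw [pauliWord_succ_mul, h, h', pauliWord]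
      ext i j
      simp only [Matrix.reindex_apply, Matrix.submatrix_apply, Matrix.kroneckerMap_apply,
        Matrix.smul_apply, smul_eq_mul]
      ring

lemma pauliWord_mul_comm : ∀ {n : ℕ} (P Q : Fin n → Fin 4),
    pauliWord n P * pauliWord n Q =
      (∏ i, letterSign (P i) (Q i)) • (pauliWord n Q * pauliWord n P)
  | 0, _, _ => by simp [pauliWord]
  | n + 1, P, Q => by
      rw [pauliWord_succ_mul, pauliWord_succ_mul, pauliMat_mul_comm,
        pauliWord_mul_comm (fun j => P j.succ) (fun j => Q j.succ), Fin.prod_univ_succ]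
      ext i j
      simp only [Matrix.reindex_apply, Matrix.submatrix_apply, Matrix.kroneckerMap_apply,
        Matrix.smul_apply]
      simp only [zsmul_eq_mul, Int.cast_mul]
      ring

lemma pauliWord_sq : ∀ {n : ℕ} (P : Fin n → Fin 4), pauliWord n P * pauliWord n P = 1
  | 0, _ => by simp [pauliWord]
  | n + 1, P => by
      rw [pauliWord_succ_mul, pauliMat_sq, pauliWord_sq (fun j => P j.succ)]
      have h := Matrix.one_kronecker_one (α := ℂ) (m := Fin 2) (n := Fin (2 ^ n))
      exact (congrArg _ h).trans (by rw [Matrix.reindex_apply, Matrix.submatrix_one_equiv])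

lemma isUnit_pauliWord {n : ℕ} (P : Fin n → Fin 4) : IsUnit (pauliWord n P) :=
  ⟨⟨_, _, pauliWord_sq P, pauliWord_sq P⟩, rfl⟩

lemma commute_pauliWord {n : ℕ} {P Q : Fin n → Fin 4}
    (h : ∏ i, letterSign (P i) (Q i) = 1) : Commute (pauliWord n P) (pauliWord n Q) := by
  rw [Commute, SemiconjBy, pauliWord_mul_comm, h, one_smul]

lemma not_commute_pauliWord {n : ℕ} {P Q : Fin n → Fin 4}
    (h : ∏ i, letterSign (P i) (Q i) = -1) : ¬ Commute (pauliWord n P) (pauliWord n Q) := by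
  intro hc
  have h1 := pauliWord_mul_comm P Q
  rw [h, neg_one_zsmul, ← hc.eq, eq_neg_iff_add_eq_zero, ← two_smul ℂ,
    smul_eq_zero_iff_right two_ne_zero] at h1
  exact ((isUnit_pauliWord P).mul (isUnit_pauliWord Q)).ne_zero h1

/-- The letters of the generators `fiveGens`. -/
def genLetters : Fin 4 → Fin 5 → Fin 4 :=
  ![![1, 3, 3, 1, 0], ![0, 1, 3, 3, 1], ![1, 0, 1, 3, 3], ![3, 1, 0, 1, 3]]

lemma fiveGens_eq (i : Fin 4) : fiveGens i = pauliWord 5 (genLetters i) := by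
  fin_cases i <;> rfl

/-- Up to cyclic rotation, three of five qubits are `{0, 1, 2}` or `{0, 1, 3}`. -/
lemma exists_rotation : ∀ m : Finset (Fin 5), m.card = 3 →
    ∃ k : Fin 5, m = {k, k + 1, k + 2} ∨ m = {k, k + 1, k + 3} := by
  decide

/-- There is a pair of anticommuting logical operators whose first member is supported in the given
three qubits. -/
lemma exists_logical_pair (m : Finset (Fin 5)) (hm : m.card = 3) :
    ∃ L₁ L₂ : Fin 5 → Fin 4, (∀ i ∉ m, L₁ i = 0) ∧
      (∀ j, ∏ i, letterSign (L₁ i) (genLetters j i) = 1) ∧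
      (∀ j, ∏ i, letterSign (L₂ i) (genLetters j i) = 1) ∧
      ∏ i, letterSign (L₁ i) (L₂ i) = -1 := by
  -- The stabilizer is invariant under rotation, so the logical operators `XYXII`, `ZXZII`
  -- (for `{0, 1, 2}`) and `XXIZI`, `ZZIYI` (for `{0, 1, 3}`) may be rotated along with `m`.
  obtain ⟨k, rfl | rfl⟩ := exists_rotation m hm
  · refine ⟨fun i => ![1, 2, 1, 0, 0] (i - k), fun i => ![3, 1, 3, 0, 0] (i - k), ?_⟩
    clear hm
    revert k
    decide
  · refine ⟨fun i => ![1, 1, 0, 3, 0] (i - k), fun i => ![3, 3, 0, 2, 0] (i - k), ?_⟩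
    clear hm
    revert k
    decide

/-- An operator failing to commute with some `B` that centralizes the generators does not lie in
the stabilizer, whatever phase it is multiplied by. -/
lemma smul_notMem_closure {A B : Matrix (Fin (2 ^ 5)) (Fin (2 ^ 5)) ℂ}
    (hB : ∀ j, Commute B (fiveGens j)) (hA : ¬ Commute B A) :
    ∀ c ∈ PauliPhase, c • A ∉ Submonoid.closure (Set.range fiveGens) := by
  intro c hc hmem
  have hc0 : c ≠ 0 := by
    rcases hc with rfl | rfl | rfl | rfl <;> simp
  have hle : Submonoid.closure (Set.range fiveGens) ≤ Submonoid.centralizer {B} := by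
    rw [Submonoid.closure_le]
    rintro _ ⟨j, rfl⟩
    exact Submonoid.mem_centralizer_iff.2 (by simpa using (hB j).eq)
  have h : Commute B (c • A) :=
    Submonoid.mem_centralizer_iff.1 (hle hmem) B rfl
  apply hA
  simpa [smul_smul, hc0] using h.smul_right c⁻¹

/-- f_{S₅}(3) = 0: for every three-element subset {m} of the qubits and
every syndrome ε attained by some Pauli word supported in {m}, there is a Pauli word
supported in {m} with syndrome ε that is not corrected by φ₅ (up to any phase). -/
theorem fiveQubit_three_qubit_never_corrected
    (m : Finset (Fin 5)) (hm : m.card = 3) (e : Fin 4 → ZMod 2)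
    (he : ∃ P : Fin 5 → Fin 4, (∀ i ∉ m, P i = 0) ∧ syndrome fiveGens (pauliWord 5 P) = e) :
    ∃ P : Fin 5 → Fin 4, (∀ i ∉ m, P i = 0) ∧ syndrome fiveGens (pauliWord 5 P) = e ∧
      ∀ c ∈ PauliPhase,
        c • (phi5 e * pauliWord 5 P) ∉ Submonoid.closure (Set.range fiveGens) := by
  obtain ⟨P, hP, he⟩ := he
  obtain ⟨L₁, L₂, hL₁, hg₁, hg₂, hL⟩ := exists_logical_pair m hm
  have hc₁ (j) : Commute (pauliWord 5 L₁) (fiveGens j) :=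
    fiveGens_eq j ▸ commute_pauliWord (hg₁ j)
  have hc₂ (j) : Commute (pauliWord 5 L₂) (fiveGens j) :=
    fiveGens_eq j ▸ commute_pauliWord (hg₂ j)
  by_cases hcomm : Commute (pauliWord 5 L₂) (phi5 e * pauliWord 5 P)
  swap
  · exact ⟨P, hP, he, smul_notMem_closure hc₂ hcomm⟩
  obtain ⟨c, hc, hmul⟩ := pauliWord_mul P L₁
  have hword : pauliWord 5 (fun i => P i ^^^ L₁ i) =
      c⁻¹ • (pauliWord 5 P * pauliWord 5 L₁) := by
    rw [hmul, smul_smul, inv_mul_cancel₀ hc, one_smul]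
  refine ⟨fun i => P i ^^^ L₁ i, fun i hi => by simp [hP i hi, hL₁ i hi], ?_,
    smul_notMem_closure hc₂ fun h => ?_⟩
  · -- Multiplication by the invertible `L₁`, which commutes with the generators, preserves syndromes.
    rw [← he]
    funext j
    have hiff : pauliWord 5 (fun i => P i ^^^ L₁ i) * fiveGens j =
        fiveGens j * pauliWord 5 (fun i => P i ^^^ L₁ i) ↔
        pauliWord 5 P * fiveGens j = fiveGens j * pauliWord 5 P := by
      rw [hword, Matrix.smul_mul, Matrix.mul_smul, (smul_right_injective _ (inv_ne_zero hc)).eq_iff,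
        mul_assoc, (hc₁ j).eq, ← mul_assoc, ← mul_assoc, (isUnit_pauliWord L₁).mul_left_inj]
    simp only [syndrome, hiff]
  · -- Cancelling the invertible `φ₅(e) P`, which commutes with `L₂`, leaves `L₁` against `L₂`.
    apply not_commute_pauliWord hL
    have hA : IsUnit (phi5 e * pauliWord 5 P) :=
      (isUnit_pauliWord (phi5Word e)).mul (isUnit_pauliWord P)
    have h' : Commute (pauliWord 5 L₂) (phi5 e * pauliWord 5 P * pauliWord 5 L₁) := by
      have := h.smul_right c
      rwa [hword, Matrix.mul_smul, smul_smul, mul_inv_cancel₀ hc, one_smul, ← mul_assoc] at this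
    have h2 := h'.eq
    rw [← mul_assoc, hcomm.eq, mul_assoc, mul_assoc _ (pauliWord 5 L₁), hA.mul_right_inj] at h2
    exact h2.symm

end
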